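/- Let d ∈ (0, 1/2) (with d ≠ 0). Then the integral ∫_ℝ ((1−x)_+^d − (−x)_+^d)^2 dx is finite and equals B(d+1, d+1)/cos(dπ), where B is the Beta function and x_+ = max(x,0). -/

import Mathlib

open MeasureTheory Real

/-!
Write `x₊ᵈ` for the truncated power. After `x ↦ -s` the integrand is `(1 + s)^(2d)` on `(-1, 0]`,
with integral `1 / (2d + 1)`, and `((1 + s)^d - s^d)^2` on `(0, ∞)`. On the half-line, the function
`F s = (1 + s)^(2d+1) + s^(2d+1) - (2s + 3) s^(d+1) (1 + s)^(d-1)` satisfies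
`(2d + 1) ((1 + s)^d - s^d)^2 = F' s + (1 - d) s^d (1 + s)^(d-2)`, with `F 0 = 1` and `F ∞ = 0`.
The remaining term is a Beta integral of the second kind, with value `B(d + 1, 1 - 2d)`; it
converges for all `|d| < 1/2`, which is why `F` is chosen in this way. The boundary value `F 0`
cancels the contribution of `(-1, 0]`, and the reflection and duplication formulas for `Γ` turn
what is left into `B(d + 1, d + 1) / cos (πd)`.
-/

open Set Filter Topology ProbabilityTheory

section BetaIntegral

variable {a b : ℝ}

lemma ofReal_betaIntegrand {x : ℝ} (hx : x ∈ Icc (0 : ℝ) 1) :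
    ((x ^ (a - 1) * (1 - x) ^ (b - 1) : ℝ) : ℂ) =
      (x : ℂ) ^ ((a : ℂ) - 1) * (1 - (x : ℂ)) ^ ((b : ℂ) - 1) := by
  rw [Complex.ofReal_mul, Complex.ofReal_cpow hx.1, Complex.ofReal_cpow (sub_nonneg.2 hx.2)]
  push_cast
  rfl

lemma integrableOn_betaIntegrand (ha : 0 < a) (hb : 0 < b) :
    IntegrableOn (fun x : ℝ => x ^ (a - 1) * (1 - x) ^ (b - 1)) (Ioo 0 1) := by
  have hconv := Complex.betaIntegral_convergent (u := a) (v := b) (by simpa) (by simpa)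
  rw [intervalIntegrable_iff_integrableOn_Ioo_of_le zero_le_one] at hconv
  have hreal := hconv.congr_fun
    (fun x hx => (ofReal_betaIntegrand (Ioo_subset_Icc_self hx)).symm) measurableSet_Ioo
  exact Integrable.re hreal

lemma integral_betaIntegrand (ha : 0 < a) (hb : 0 < b) :
    ∫ x in Ioo (0 : ℝ) 1, x ^ (a - 1) * (1 - x) ^ (b - 1) = beta a b := by
  rw [beta_eq_betaIntegralReal a b ha hb, Complex.betaIntegral,
    intervalIntegral.integral_of_le zero_le_one, integral_Ioc_eq_integral_Ioo,
    setIntegral_congr_fun measurableSet_Ioo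
      (fun x hx => (ofReal_betaIntegrand (Ioo_subset_Icc_self hx)).symm),
    integral_complex_ofReal, Complex.ofReal_re]

lemma image_inv_sub_one_Ioo : (fun t : ℝ => t⁻¹ - 1) '' Ioo 0 1 = Ioi 0 := by
  ext s
  constructor
  · rintro ⟨t, ⟨ht0, ht1⟩, rfl⟩
    exact sub_pos.2 ((one_lt_inv₀ ht0).2 ht1)
  · intro (hs : 0 < s)
    exact ⟨(1 + s)⁻¹, ⟨by positivity, inv_lt_one_of_one_lt₀ (by linarith)⟩, by simp⟩

lemma hasDerivAt_inv_sub_one {t : ℝ} (ht : t ≠ 0) :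
    HasDerivAt (fun t : ℝ => t⁻¹ - 1) (-(t ^ 2)⁻¹) t :=
  (hasDerivAt_inv ht).sub_const 1

lemma injOn_inv_sub_one (S : Set ℝ) : InjOn (fun t : ℝ => t⁻¹ - 1) S :=
  (sub_left_injective.comp inv_injective).injOn

lemma betaIntegrand_eq_abs_deriv_smul {t : ℝ} (ht : t ∈ Ioo (0 : ℝ) 1) :
    t ^ (b - 1) * (1 - t) ^ (a - 1) =
      |-(t ^ 2)⁻¹| • ((t⁻¹ - 1) ^ (a - 1) * (1 + (t⁻¹ - 1)) ^ (-(a + b))) := by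
  obtain ⟨ht0, ht1⟩ := ht
  have hsub : t⁻¹ - 1 = (1 - t) / t := by field_simp
  have hpow : t ^ (b - 1) = (t ^ 2)⁻¹ * (t ^ (a + b) / t ^ (a - 1)) := by
    rw [← rpow_sub ht0, ← rpow_natCast, ← rpow_neg ht0.le, ← rpow_add ht0]
    congr 1
    push_cast
    ring
  rw [add_sub_cancel, hsub, div_rpow (sub_pos.2 ht1).le ht0.le, inv_rpow ht0.le, rpow_neg ht0.le,
    inv_inv, abs_neg, abs_of_pos (by positivity), smul_eq_mul, hpow]
  ring

lemma integrableOn_rpow_mul_one_add_rpow (ha : 0 < a) (hb : 0 < b) :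
    IntegrableOn (fun s : ℝ => s ^ (a - 1) * (1 + s) ^ (-(a + b))) (Ioi 0) := by
  rw [← image_inv_sub_one_Ioo, integrableOn_image_iff_integrableOn_abs_deriv_smul
    measurableSet_Ioo (fun _ ht => (hasDerivAt_inv_sub_one ht.1.ne').hasDerivWithinAt)
    (injOn_inv_sub_one _)]
  exact (integrableOn_betaIntegrand hb ha).congr_fun
    (fun _ => betaIntegrand_eq_abs_deriv_smul) measurableSet_Ioo

lemma integral_rpow_mul_one_add_rpow (ha : 0 < a) (hb : 0 < b) :
    ∫ s in Ioi (0 : ℝ), s ^ (a - 1) * (1 + s) ^ (-(a + b)) = beta a b := by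
  rw [← image_inv_sub_one_Ioo, integral_image_eq_integral_abs_deriv_smul
      measurableSet_Ioo (fun _ ht => (hasDerivAt_inv_sub_one ht.1.ne').hasDerivWithinAt)
      (injOn_inv_sub_one _),
    ← setIntegral_congr_fun measurableSet_Ioo (fun _ => betaIntegrand_eq_abs_deriv_smul),
    integral_betaIntegrand hb ha, beta, beta, mul_comm, add_comm]

end BetaIntegral

section Gamma

variable {d : ℝ}

lemma Gamma_one_add_mul_Gamma_one_sub_eq_mul_cos (h : cos (d * π) ≠ 0) :
    Gamma (1 + d) * Gamma (1 - d) = Gamma (1 + 2 * d) * Gamma (1 - 2 * d) * cos (d * π) := by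
  have duplication_add :
      Gamma (1 / 2 + d) * Gamma (1 + d) = Gamma (1 + 2 * d) * 2 ^ (-(2 * d)) * √π := by
    have h_add : 1 / 2 + d + 1 / 2 = 1 + d := by ring
    have h_two_mul : 2 * (1 / 2 + d) = 1 + 2 * d := by ring
    rw [← h_add, Gamma_mul_Gamma_add_half, h_two_mul, sub_add_cancel_left]
  have duplication_sub :
      Gamma (1 / 2 - d) * Gamma (1 - d) = Gamma (1 - 2 * d) * 2 ^ (2 * d) * √π := by
    have h_add : 1 / 2 - d + 1 / 2 = 1 - d := by ring
    have h_two_mul : 2 * (1 / 2 - d) = 1 - 2 * d := by ring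
    rw [← h_add, Gamma_mul_Gamma_add_half, h_two_mul, sub_sub_cancel]
  have reflection : Gamma (1 / 2 + d) * Gamma (1 / 2 - d) * cos (d * π) = π := by
    have h_sub : 1 - (1 / 2 + d) = 1 / 2 - d := by ring
    have h_angle : π * (1 / 2 + d) = d * π + π / 2 := by ring
    rw [← h_sub, Gamma_mul_Gamma_one_sub, h_angle, sin_add_pi_div_two, div_mul_cancel₀ _ h]
  have two_rpow : (2 : ℝ) ^ (-(2 * d)) * 2 ^ (2 * d) = 1 := by
    rw [← rpow_add two_pos, neg_add_cancel, rpow_zero]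
  refine mul_left_cancel₀ pi_ne_zero ?_
  calc π * (Gamma (1 + d) * Gamma (1 - d))
      = (Gamma (1 / 2 + d) * Gamma (1 + d)) * (Gamma (1 / 2 - d) * Gamma (1 - d)) *
          cos (d * π) := by
        linear_combination -(Gamma (1 + d) * Gamma (1 - d)) * reflection
    _ = (√π * √π) * (2 ^ (-(2 * d)) * 2 ^ (2 * d)) *
          (Gamma (1 + 2 * d) * Gamma (1 - 2 * d) * cos (d * π)) := by
        rw [duplication_add, duplication_sub]; ring
    _ = π * (Gamma (1 + 2 * d) * Gamma (1 - 2 * d) * cos (d * π)) := by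
        rw [two_rpow, mul_self_sqrt pi_pos.le, mul_one]

lemma add_sub_one_mul_beta {a b : ℝ} (h : a + b - 1 ≠ 0) :
    (a + b - 1) * beta a b = Gamma a * Gamma b / Gamma (a + b - 1) := by
  rw [beta, ← sub_add_cancel (a + b) 1, Gamma_add_one h, sub_add_cancel, ← mul_div_assoc,
    mul_div_mul_left _ _ h]

lemma one_sub_mul_beta_eq_mul_beta_div_cos (h₁ : -1 / 2 < d) (h₂ : d < 1 / 2) :
    (1 - d) * beta (d + 1) (1 - 2 * d) = (2 * d + 1) * (beta (d + 1) (d + 1) / cos (d * π)) := by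
  have hcos : 0 < cos (d * π) := cos_pos_of_mem_Ioo ⟨by nlinarith [pi_pos], by nlinarith [pi_pos]⟩
  have hΓ₁ : 0 < Gamma (1 - d) := Gamma_pos_of_pos (by linarith)
  have hΓ₂ : 0 < Gamma (2 * d + 1) := Gamma_pos_of_pos (by linarith)
  have hΓ := Gamma_one_add_mul_Gamma_one_sub_eq_mul_cos hcos.ne'
  rw [add_comm 1 d, add_comm 1 (2 * d)] at hΓ
  have h_left : (1 - d) * beta (d + 1) (1 - 2 * d) =
      Gamma (d + 1) * Gamma (1 - 2 * d) / Gamma (1 - d) := by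
    have h_sum : d + 1 + (1 - 2 * d) - 1 = 1 - d := by ring
    simpa only [h_sum] using add_sub_one_mul_beta (a := d + 1) (b := 1 - 2 * d) (by linarith)
  have h_right : (2 * d + 1) * beta (d + 1) (d + 1) =
      Gamma (d + 1) * Gamma (d + 1) / Gamma (2 * d + 1) := by
    have h_sum : d + 1 + (d + 1) - 1 = 2 * d + 1 := by ring
    simpa only [h_sum] using add_sub_one_mul_beta (a := d + 1) (b := d + 1) (by linarith)
  rw [h_left, ← mul_div_assoc, h_right, div_div, div_eq_div_iff (by positivity) (by positivity)]
  linear_combination -Gamma (d + 1) * hΓ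

end Gamma

section PowerIncrement

variable {d s : ℝ}

lemma abs_one_add_rpow_sub_rpow_le (hd : d ≤ 1) (hs : 0 < s) :
    |(1 + s) ^ d - s ^ d| ≤ |d| * s ^ (d - 1) := by
  have hderiv : ∀ u ∈ Icc s (1 + s),
      HasDerivWithinAt (fun u : ℝ => u ^ d) (d * u ^ (d - 1)) (Icc s (1 + s)) u := fun u hu =>
    (hasDerivAt_rpow_const (Or.inl (hs.trans_le hu.1).ne')).hasDerivWithinAt
  have hbound : ∀ u ∈ Icc s (1 + s), ‖d * u ^ (d - 1)‖ ≤ |d| * s ^ (d - 1) := fun u hu => by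
    rw [norm_mul, norm_eq_abs, norm_of_nonneg (rpow_nonneg (hs.le.trans hu.1) _)]
    gcongr ?_ * ?_
    exact rpow_le_rpow_of_nonpos hs hu.1 (sub_nonpos.2 hd)
  simpa using (convex_Icc s (1 + s)).norm_image_sub_le_of_norm_hasDerivWithin_le hderiv hbound
    (left_mem_Icc.2 (by linarith)) (right_mem_Icc.2 (by linarith))

lemma integrableOn_Ioc_one_add_rpow_sub_rpow_sq (hd : -1 / 2 < d) :
    IntegrableOn (fun s : ℝ => ((1 + s) ^ d - s ^ d) ^ 2) (Ioc 0 1) := by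
  have hleft : IntegrableOn (fun s : ℝ => (1 + s) ^ (2 * d)) (Ioc 0 1) := by
    refine (ContinuousOn.integrableOn_Icc fun s hs => ?_).mono_set Ioc_subset_Icc_self
    exact (continuousAt_const.add continuousAt_id |>.rpow_const
      (Or.inl (by linarith [hs.1] : 1 + s ≠ 0))).continuousWithinAt
  have hright : IntegrableOn (fun s : ℝ => s ^ (2 * d)) (Ioc 0 1) :=
    (intervalIntegrable_iff_integrableOn_Ioc_of_le zero_le_one).1
      (intervalIntegral.intervalIntegrable_rpow' (by linarith))
  refine Integrable.mono' (hleft.add hright) (by fun_prop) ?_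
  filter_upwards [ae_restrict_mem measurableSet_Ioc] with s ⟨hs, _⟩
  have hcross : 0 ≤ (1 + s) ^ d * s ^ d := by positivity
  rw [norm_of_nonneg (by positivity), Pi.add_apply, mul_comm 2 d, rpow_mul hs.le,
    rpow_mul (by positivity), rpow_two, rpow_two]
  linarith [sub_sq ((1 + s) ^ d) (s ^ d)]

lemma integrableOn_Ioi_one_add_rpow_sub_rpow_sq (hd : d < 1 / 2) :
    IntegrableOn (fun s : ℝ => ((1 + s) ^ d - s ^ d) ^ 2) (Ioi 1) := by
  have htail := (integrableOn_Ioi_rpow_of_lt (by linarith : (d - 1) * 2 < -1) one_pos).const_mul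
    (d ^ 2)
  refine Integrable.mono' htail (by fun_prop) ?_
  filter_upwards [ae_restrict_mem measurableSet_Ioi] with s (hs : 1 < s)
  have hs0 : 0 < s := one_pos.trans hs
  rw [norm_of_nonneg (by positivity), rpow_mul hs0.le, rpow_two, ← mul_pow, sq_le_sq, abs_mul,
    abs_of_pos (rpow_pos_of_pos hs0 _)]
  exact abs_one_add_rpow_sub_rpow_le (by linarith) hs0

lemma integrableOn_one_add_rpow_sub_rpow_sq (h₁ : -1 / 2 < d) (h₂ : d < 1 / 2) :
    IntegrableOn (fun s : ℝ => ((1 + s) ^ d - s ^ d) ^ 2) (Ioi 0) := by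
  rw [← Ioc_union_Ioi_eq_Ioi (zero_le_one' ℝ)]
  exact (integrableOn_Ioc_one_add_rpow_sub_rpow_sq h₁).union
    (integrableOn_Ioi_one_add_rpow_sub_rpow_sq h₂)

/-- The function `F` whose derivative reduces the integral of `((1 + s) ^ d - s ^ d) ^ 2` over
`(0, ∞)` to a Beta integral. It is written with the exponents `2 * d + 1` and `d + 1`, which are
positive for `-1/2 < d`, so that it is continuous at `0` also when `d < 0`. -/
noncomputable def incrementPrimitive (d s : ℝ) : ℝ :=
  (1 + s) ^ (2 * d + 1) + s ^ (2 * d + 1) - (2 * s + 3) * (s ^ (d + 1) * (1 + s) ^ (d - 1))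

lemma incrementPrimitive_zero (hd : -1 / 2 < d) : incrementPrimitive d 0 = 1 := by
  simp [incrementPrimitive, zero_rpow (by linarith : 2 * d + 1 ≠ 0),
    zero_rpow (by linarith : d + 1 ≠ 0)]

lemma continuousAt_incrementPrimitive_zero (hd : -1 / 2 < d) :
    ContinuousAt (incrementPrimitive d) 0 := by
  have hpow {p : ℝ} (hp : 0 < p) : ContinuousAt (fun s : ℝ => s ^ p) 0 :=
    continuousAt_rpow_const 0 p (Or.inr hp.le)
  have hpow_one_add (p : ℝ) : ContinuousAt (fun s : ℝ => (1 + s) ^ p) 0 :=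
    (continuousAt_const.add continuousAt_id).rpow_const (Or.inl (by simp))
  have hlin : ContinuousAt (fun s : ℝ => 2 * s + 3) 0 := by fun_prop
  exact ((hpow_one_add _).add (hpow (by linarith))).sub
    (hlin.mul ((hpow (by linarith)).mul (hpow_one_add _)))

lemma hasDerivAt_incrementPrimitive (hs : 0 < s) :
    HasDerivAt (incrementPrimitive d)
      ((2 * d + 1) * ((1 + s) ^ d - s ^ d) ^ 2 - (1 - d) * (s ^ d * (1 + s) ^ (d - 2))) s := by
  have hs1 : 0 < 1 + s := by positivity
  have hpow (p : ℝ) : HasDerivAt (fun s : ℝ => s ^ p) (p * s ^ (p - 1)) s :=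
    hasDerivAt_rpow_const (Or.inl hs.ne')
  have hpow_one_add (p : ℝ) : HasDerivAt (fun s : ℝ => (1 + s) ^ p) (p * (1 + s) ^ (p - 1)) s := by
    simpa using ((hasDerivAt_id s).const_add 1).rpow_const (p := p) (Or.inl hs1.ne')
  have hlin : HasDerivAt (fun s : ℝ => 2 * s + 3) 2 s := by
    simpa using ((hasDerivAt_id s).const_mul 2).add_const 3
  refine (((hpow_one_add _).add (hpow _)).sub
    (hlin.mul ((hpow (d + 1)).mul (hpow_one_add (d - 1))))).congr_deriv ?_
  have hsq {u : ℝ} (hu : 0 < u) : u ^ (2 * d) = (u ^ d) ^ 2 := by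
    rw [mul_comm, rpow_mul hu.le, rpow_two]
  have hsub : d - 2 = d - 1 - 1 := by ring
  simp only [Pi.mul_apply, add_sub_cancel_right, hsub, hsq hs, hsq hs1, rpow_add_one hs.ne',
    rpow_sub_one hs1.ne']
  field_simp
  ring

lemma incrementPrimitive_eq (hs : 0 < s) :
    incrementPrimitive d s = s * ((1 + s) ^ d - s ^ d) ^ 2
      + (1 + s) ^ d * ((1 + s) ^ d - s ^ d) + (1 + s) ^ d * s ^ d / (1 + s) := by
  have hs1 : 0 < 1 + s := by positivity
  have hodd {u : ℝ} (hu : 0 < u) : u ^ (2 * d + 1) = (u ^ d) ^ 2 * u := by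
    rw [rpow_add_one hu.ne', mul_comm 2, rpow_mul hu.le, rpow_two]
  rw [incrementPrimitive, hodd hs, hodd hs1, rpow_add_one hs.ne', rpow_sub_one hs1.ne']
  field_simp
  ring

lemma abs_incrementPrimitive_le (hd : |d| ≤ 1) (hs : 1 ≤ s) :
    |incrementPrimitive d s| ≤ 4 * s ^ (2 * d - 1) := by
  have hs0 : 0 < s := one_pos.trans_le hs
  have hs1 : 0 < 1 + s := by positivity
  set w := s ^ (d - 1) with hw
  have hw0 : 0 < w := rpow_pos_of_pos hs0 _
  have hpow : s ^ d = s * w := by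
    rw [hw, mul_comm, ← rpow_add_one hs0.ne', sub_add_cancel]
  have hincr : |(1 + s) ^ d - s ^ d| ≤ w :=
    (abs_one_add_rpow_sub_rpow_le (le_of_abs_le hd) hs0).trans (mul_le_of_le_one_left hw0.le hd)
  have hpow_one_add : (1 + s) ^ d ≤ (1 + s) * w := by
    linarith [le_of_abs_le hincr]
  have hmain : s ^ (2 * d - 1) = s * w ^ 2 := by
    rw [hw, ← rpow_two, ← rpow_mul hs0.le, mul_comm s, ← rpow_add_one hs0.ne']
    ring_nf
  calc |incrementPrimitive d s|
      ≤ s * |(1 + s) ^ d - s ^ d| ^ 2 + (1 + s) ^ d * |(1 + s) ^ d - s ^ d|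
          + (1 + s) ^ d * s ^ d / (1 + s) := by
        rw [incrementPrimitive_eq hs0]
        refine (abs_add_three _ _ _).trans_eq ?_
        simp only [abs_mul, abs_div, abs_pow, abs_of_pos hs0, abs_of_pos hs1,
          abs_of_pos (rpow_pos_of_pos hs0 d), abs_of_pos (rpow_pos_of_pos hs1 d)]
    _ ≤ s * w ^ 2 + (1 + s) * w * w + (1 + s) * w * (s * w) / (1 + s) := by
        rw [← hpow]
        gcongr
    _ = (3 * s + 1) * w ^ 2 := by field_simp; ring
    _ ≤ 4 * s ^ (2 * d - 1) := by rw [hmain, ← mul_assoc]; gcongr; linarith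

lemma tendsto_incrementPrimitive_atTop (h₁ : -1 ≤ d) (h₂ : d < 1 / 2) :
    Tendsto (incrementPrimitive d) atTop (𝓝 0) := by
  have hlim : Tendsto (fun s : ℝ => 4 * s ^ (2 * d - 1)) atTop (𝓝 0) := by
    simpa using (tendsto_rpow_neg_atTop (by linarith : 0 < 1 - 2 * d)).const_mul 4
  refine squeeze_zero_norm' ?_ hlim
  filter_upwards [eventually_ge_atTop 1] with s hs
  exact abs_incrementPrimitive_le (abs_le.2 ⟨h₁, by linarith⟩) hs

lemma integral_one_add_rpow_sub_rpow_sq (h₁ : -1 / 2 < d) (h₂ : d < 1 / 2) :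
    ∫ s in Ioi (0 : ℝ), ((1 + s) ^ d - s ^ d) ^ 2 =
      beta (d + 1) (d + 1) / cos (d * π) - 1 / (2 * d + 1) := by
  have ha : 0 < d + 1 := by linarith
  have hb : 0 < 1 - 2 * d := by linarith
  have hbeta_int := integrableOn_rpow_mul_one_add_rpow ha hb
  have hbeta := integral_rpow_mul_one_add_rpow ha hb
  have hexp : -(d + 1 + (1 - 2 * d)) = d - 2 := by ring
  simp only [add_sub_cancel_right, hexp] at hbeta_int hbeta
  have hsq_int := integrableOn_one_add_rpow_sub_rpow_sq h₁ h₂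
  have hftc := integral_Ioi_of_hasDerivAt_of_tendsto
    (continuousAt_incrementPrimitive_zero h₁).continuousWithinAt
    (fun s hs => hasDerivAt_incrementPrimitive hs)
    ((hsq_int.const_mul _).sub (hbeta_int.const_mul _))
    (tendsto_incrementPrimitive_atTop (by linarith) h₂)
  rw [integral_sub (hsq_int.const_mul _) (hbeta_int.const_mul _), integral_const_mul,
    integral_const_mul, hbeta, one_sub_mul_beta_eq_mul_beta_div_cos h₁ h₂,
    incrementPrimitive_zero h₁] at hftc
  have hd : 2 * d + 1 ≠ 0 := by linarith
  refine mul_left_cancel₀ hd ?_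
  rw [mul_sub, mul_one_div_cancel hd]
  linarith

end PowerIncrement

section TruncatedPower

/-- The truncated power `x₊ᵈ`, with the convention that it vanishes for `x ≤ 0` whatever the
exponent `d` is; it differs from `(max x 0) ^ d` only for `d = 0`, because `0 ^ 0 = 1`. -/
noncomputable def truncPow (d x : ℝ) : ℝ :=
  (Ioi 0).indicator (· ^ d) x

variable {d : ℝ}

lemma max_zero_rpow_eq_truncPow (hd : d ≠ 0) (x : ℝ) : max x 0 ^ d = truncPow d x := by
  rcases lt_or_ge 0 x with hx | hx
  · simp [truncPow, hx, hx.le]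
  · simp [truncPow, hx, hx.not_gt, zero_rpow hd]

lemma truncPow_one_add_sub_truncPow_sq (d s : ℝ) :
    (truncPow d (1 + s) - truncPow d s) ^ 2 =
      (Ioi 0).indicator (fun s => ((1 + s) ^ d - s ^ d) ^ 2) s +
        (Ioc (-1) 0).indicator (fun s => (1 + s) ^ (2 * d)) s := by
  rcases lt_or_ge 0 s with hs | hs
  · simp [truncPow, hs, hs.not_ge, (by linarith : 0 < 1 + s)]
  · rcases lt_or_ge (-1) s with hs' | hs'
    · have hs1 : 0 < 1 + s := by linarith
      simp [truncPow, hs, hs.not_gt, hs', hs1, mul_comm 2 d, rpow_mul hs1.le]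
    · simp [truncPow, hs.not_gt, hs'.not_gt, (by linarith : ¬ 0 < 1 + s)]

lemma integrableOn_Ioc_one_add_rpow {p : ℝ} (hp : -1 < p) :
    IntegrableOn (fun s : ℝ => (1 + s) ^ p) (Ioc (-1) 0) := by
  have h := (intervalIntegral.intervalIntegrable_rpow' (a := 0) (b := 1) hp).comp_add_left 1
  rwa [zero_sub, sub_self, intervalIntegrable_iff_integrableOn_Ioc_of_le (by simp)] at h

lemma integral_Ioc_one_add_rpow {p : ℝ} (hp : -1 < p) :
    ∫ s in Ioc (-1 : ℝ) 0, (1 + s) ^ p = 1 / (p + 1) := by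
  rw [← intervalIntegral.integral_of_le (by simp),
    intervalIntegral.integral_comp_add_left (fun x => x ^ p), integral_rpow (Or.inl hp)]
  simp [zero_rpow (by linarith : p + 1 ≠ 0)]

end TruncatedPower

theorem stmt_3_general (d : ℝ) (hd : d ∈ Ioo (-1 / 2 : ℝ) (1 / 2)) :
    Integrable (fun x : ℝ => (truncPow d (1 - x) - truncPow d (-x)) ^ 2) ∧
    ∫ x : ℝ, (truncPow d (1 - x) - truncPow d (-x)) ^ 2 =
      beta (d + 1) (d + 1) / cos (d * π) := by
  obtain ⟨h₁, h₂⟩ := hd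
  have hp : -1 < 2 * d := by linarith
  have hright := (integrableOn_one_add_rpow_sub_rpow_sq h₁ h₂).integrable_indicator
    measurableSet_Ioi
  have hleft := (integrableOn_Ioc_one_add_rpow hp).integrable_indicator measurableSet_Ioc
  have hsplit := funext (truncPow_one_add_sub_truncPow_sq d)
  constructor
  · have hint : Integrable fun s => (truncPow d (1 + s) - truncPow d s) ^ 2 :=
      hsplit ▸ hright.add hleft
    exact hint.comp_neg
  · have hneg := integral_neg_eq_self (fun s => (truncPow d (1 + s) - truncPow d s) ^ 2) volume
    simp only [← sub_eq_add_neg] at hneg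
    rw [hneg, hsplit, integral_add hright hleft, integral_indicator measurableSet_Ioi,
      integral_indicator measurableSet_Ioc, integral_one_add_rpow_sub_rpow_sq h₁ h₂,
      integral_Ioc_one_add_rpow hp, sub_add_cancel]

theorem stmt_3 (d : ℝ) (hd : d ∈ Set.Ioo (0 : ℝ) (1/2)) :
    Integrable (fun x : ℝ => ((max (1 - x) 0) ^ d - (max (-x) 0) ^ d) ^ 2) ∧
    ∫ x : ℝ, ((max (1 - x) 0) ^ d - (max (-x) 0) ^ d) ^ 2 =
      (Real.Gamma (d + 1) * Real.Gamma (d + 1) / Real.Gamma (d + 1 + (d + 1))) /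
        Real.cos (d * Real.pi) := by
  simp only [max_zero_rpow_eq_truncPow hd.1.ne']
  exact stmt_3_general d ⟨by linarith [hd.1], hd.2⟩
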